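/- Let ℓ be a prime and (K,v) a valued field with char K ≠ ℓ and K containing a primitive ℓ-th root of unity. Fix a separable closure K_sep of K, let K' ⊆ K_sep be the field obtained from K by adjoining all ℓ-th roots of all elements of K^×, and let O' be a valuation subring of K' with O' ∩ K = O_v, with maximal ideal m'. Let D = {σ ∈ Gal(K'/K) : σ(O') = O'} be the decomposition group and I = {σ ∈ D : σ(x) − x ∈ m' for all x ∈ O'} the inertia group of O' over v. Let D_v^1 ≤ Gal(K'/K) be the subgroup of automorphisms fixing pointwise every α ∈ K' with α^ℓ ∈ 1+m_v, and I_v^1 the subgroup fixing pointwise every α ∈ K' with α^ℓ ∈ O_v^×. Then D_v^1 ⊆ D and I_v^1 ⊆ I; if moreover the residue field k(v) has characteristic different from ℓ, then D_v^1 = D and I_v^1 = I. -/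

import Mathlib

/-- The field `K' = K(√[ℓ]{K^×})` inside a separable closure `Ω` of `K`, generated over
`K` by all `α` with `α^ℓ ∈ K^×`. -/
noncomputable def Kprime (K : Type*) [Field K] (Ω : Type*) [Field Ω] [Algebra K Ω]
    (ℓ : ℕ) : IntermediateField K Ω :=
  IntermediateField.adjoin K {α : Ω | ∃ x : K, x ≠ 0 ∧ α ^ ℓ = algebraMap K Ω x}

section

variable (K : Type*) [Field K] (Ω : Type*) [Field Ω] [Algebra K Ω] (ℓ : ℕ)

/-- The decomposition group of `O'` over `v`: automorphisms of `K'|K` with `σ(O') = O'`. -/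
def Dgp (O' : ValuationSubring ↥(Kprime K Ω ℓ)) :
    Set (↥(Kprime K Ω ℓ) ≃ₐ[K] ↥(Kprime K Ω ℓ)) :=
  {σ | ∀ x : ↥(Kprime K Ω ℓ), x ∈ O' ↔ σ x ∈ O'}

/-- The inertia group of `O'` over `v`: elements `σ` of the decomposition group with
`σ(x) - x ∈ m'` for all `x ∈ O'`. -/
def Igp (O' : ValuationSubring ↥(Kprime K Ω ℓ)) :
    Set (↥(Kprime K Ω ℓ) ≃ₐ[K] ↥(Kprime K Ω ℓ)) :=
  {σ | σ ∈ Dgp K Ω ℓ O' ∧ ∀ x : ↥(Kprime K Ω ℓ), x ∈ O' → O'.valuation (σ x - x) < 1}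

/-- `D_v^1`: automorphisms of `K'|K` fixing each `α` with `α^ℓ ∈ 1 + m_v`. -/
def D1gp (O : ValuationSubring K) :
    Set (↥(Kprime K Ω ℓ) ≃ₐ[K] ↥(Kprime K Ω ℓ)) :=
  {σ | ∀ α : ↥(Kprime K Ω ℓ),
    (∃ a : K, O.valuation a < 1 ∧ α ^ ℓ = algebraMap K ↥(Kprime K Ω ℓ) (1 + a)) → σ α = α}

/-- `I_v^1`: automorphisms of `K'|K` fixing each `α` with `α^ℓ ∈ O_v^×`. -/
def I1gp (O : ValuationSubring K) :
    Set (↥(Kprime K Ω ℓ) ≃ₐ[K] ↥(Kprime K Ω ℓ)) :=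
  {σ | ∀ α : ↥(Kprime K Ω ℓ),
    (∃ u : Kˣ, u ∈ O.unitGroup ∧ α ^ ℓ = algebraMap K ↥(Kprime K Ω ℓ) (u : K)) → σ α = α}

end

/-!
Suppose `σ` lies outside the decomposition (inertia) group `H` at a finite level `F`. As `Gal(F/K)`
is abelian of exponent dividing `n` and `K` contains a primitive `n`-th root of unity, there is a
character `χ`, trivial on `H`, with `χ(σ) ≠ 1`. Lagrange resolvents in the integral closure of `O`
provide a `b` with `τ(b) = χ(τ) b` for all `τ` and with `b ≡ 1` (`b` a unit) at the center of `O'`: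
in the ring of invariants of `H` the conjugates of the center (the homomorphisms to its residue
ring) become distinct, so the Chinese remainder theorem (Dedekind's theorem) applies. Then
`b ^ n ∈ K` is in `1 + m` (is a unit of `O`), but `σ(b) ≠ b`.

Conversely, if `n` is invertible in the residue field, two `n`-th roots of the same unit that are
congruent modulo `m'` are equal.
-/

section FiniteGroupAction

open scoped Pointwise

variable {A B G : Type*} [CommRing A] [CommRing B] [Algebra A B] [Group G]
  [MulSemiringAction G B] [SMulCommClass G A B]

/-- The Lagrange resolvent `∑ χ(g)⁻¹ g(y)`, the basic source of elements on which `G` acts through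
the character `χ`. -/
def lagrangeResolvent [Fintype G] (χ : G →* Aˣ) (y : B) : B :=
  ∑ g, (χ g)⁻¹ • g • y

theorem smul_lagrangeResolvent [Fintype G] (χ : G →* Aˣ) (y : B) (h : G) :
    h • lagrangeResolvent χ y = χ h • lagrangeResolvent χ y := by
  simp only [lagrangeResolvent, Finset.smul_sum]
  refine Fintype.sum_equiv (Equiv.mulLeft h) _ _ fun g ↦ ?_
  rw [smul_comm h, Equiv.coe_mulLeft, map_mul, smul_smul, smul_smul, mul_inv_rev,
    mul_comm (χ g)⁻¹, mul_inv_cancel_left]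

/-- By the Chinese remainder theorem there is a `y` with `y ≡ 1` at `P` and `y ≡ 0` at all other
conjugates of `P`; its resolvent is the sought eigenvector. -/
theorem exists_eigenvector_sub_one_mem_of_stabilizer_eq_bot [Finite G] {P : Ideal B} [P.IsMaximal]
    (hP : MulAction.stabilizer G P = ⊥) (χ : G →* Aˣ) :
    ∃ b : B, b - 1 ∈ P ∧ ∀ g : G, g • b = χ g • b := by
  classical
  have := Fintype.ofFinite G
  have conj_ne (g : G) (hg : g ≠ 1) : P ≠ g • P := fun h ↦
    hg (by simpa [hP] using MulAction.mem_stabilizer_iff.2 h.symm)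
  have conj_isMaximal (g : G) : (g • P).IsMaximal := by
    rw [Ideal.pointwise_smul_eq_comap]
    infer_instance
  have coprime : IsCoprime P (⨅ g ∈ Finset.univ.erase (1 : G), g • P) :=
    Ideal.isCoprime_biInf fun g hg ↦
      Ideal.isCoprime_of_isMaximal (conj_ne g (Finset.ne_of_mem_erase hg))
  obtain ⟨z, hz, y, hy, hzy⟩ := Ideal.isCoprime_iff_exists.1 coprime
  have smul_mem (g : G) (hg : g ≠ 1) : g • y ∈ P := by
    rw [← Ideal.mem_inv_pointwise_smul_iff]
    simp only [Ideal.mem_iInf] at hy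
    exact hy g⁻¹ (by simpa using hg)
  refine ⟨lagrangeResolvent χ y, ?_, smul_lagrangeResolvent χ y⟩
  rw [lagrangeResolvent, ← Finset.add_sum_erase _ _ (Finset.mem_univ 1), add_sub_right_comm]
  refine P.add_mem ?_ (P.sum_mem fun g hg ↦ ?_)
  · have : y - 1 = -z := by rw [← hzy]; ring
    simpa [this] using hz
  · rw [Units.smul_def]
    exact Submodule.smul_of_tower_mem P _ (smul_mem g (Finset.ne_of_mem_erase hg))

/-- The homomorphisms `y ↦ g(y) mod P` are pairwise distinct, so by Dedekind's theorem some
resolvent does not vanish modulo `P`. -/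
theorem exists_eigenvector_notMem_of_inertia_eq_bot [Finite G] {P : Ideal B} [P.IsPrime]
    (hP : P.inertia G = ⊥) (χ : G →* Aˣ) :
    ∃ b : B, b ∉ P ∧ ∀ g : G, g • b = χ g • b := by
  have := Fintype.ofFinite G
  let φ (g : G) : B →* B ⧸ P :=
    (Ideal.Quotient.mk P).toMonoidHom.comp (MulSemiringAction.toRingHom G B g)
  have φ_apply (g : G) (y : B) : φ g y = Ideal.Quotient.mk P (g • y) := rfl
  have φ_injective : Function.Injective φ := fun g h hgh ↦ by
    have : g * h⁻¹ ∈ P.inertia G := fun y ↦ by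
      have := DFunLike.congr_fun hgh (h⁻¹ • y)
      rw [φ_apply, φ_apply, smul_inv_smul, smul_smul] at this
      exact Ideal.Quotient.eq.1 this
    rwa [hP, Subgroup.mem_bot, mul_inv_eq_one] at this
  have linearIndependent : LinearIndependent (B ⧸ P) fun g ↦ (φ g : B → B ⧸ P) :=
    (linearIndependent_monoidHom B (B ⧸ P)).comp φ φ_injective
  by_contra! h
  have resolvent_eq_zero : ∑ g, algebraMap A (B ⧸ P) ↑(χ g)⁻¹ • (φ g : B → B ⧸ P) = 0 := by
    ext y
    have : lagrangeResolvent χ y ∈ P := by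
      by_contra hy
      obtain ⟨g, hg⟩ := h _ hy
      exact hg (smul_lagrangeResolvent χ y g)
    have := Ideal.Quotient.eq_zero_iff_mem.2 this
    simp only [lagrangeResolvent, Units.smul_def, Algebra.smul_def, map_sum, map_mul,
      Ideal.Quotient.mk_algebraMap] at this
    simpa only [Finset.sum_apply, Pi.smul_apply, φ_apply, smul_eq_mul, Pi.zero_apply] using this
  have := Fintype.linearIndependent_iff.1 linearIndependent _ resolvent_eq_zero 1
  simp at this

section Quotient

instance isInvariant_fixedPoints_subalgebra (H : Subgroup G) :
    Algebra.IsInvariant (FixedPoints.subalgebra A B H) B H :=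
  ⟨fun b hb ↦ ⟨⟨b, hb⟩, rfl⟩⟩

theorem exists_smul_eq_smul_of_mk_mem_stabilizer_under [Finite G] {H : Subgroup G} [H.Normal]
    {Q : Ideal B} [Q.IsPrime] {g : G}
    (hg : (g : G ⧸ H) ∈ MulAction.stabilizer (G ⧸ H) (Q.under (FixedPoints.subalgebra A B H))) :
    ∃ h ∈ H, g • Q = h • Q := by
  have under_smul : (g • Q).under (FixedPoints.subalgebra A B H) =
      (g : G ⧸ H) • Q.under (FixedPoints.subalgebra A B H) := by
    ext y
    rw [Ideal.mem_pointwise_smul_iff_inv_smul_mem, Ideal.mem_comap, Ideal.mem_comap,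
      Ideal.mem_pointwise_smul_iff_inv_smul_mem]
    rfl
  have under_eq := (under_smul.trans (MulAction.mem_stabilizer_iff.1 hg)).symm
  obtain ⟨⟨h, hh⟩, hgh⟩ :=
    Algebra.IsInvariant.exists_smul_of_under_eq (FixedPoints.subalgebra A B H) B H _ _ under_eq
  exact ⟨h, hh, hgh⟩

variable (A) in
theorem stabilizer_under_fixedPoints_eq_bot [Finite G] (Q : Ideal B) [Q.IsPrime]
    [(MulAction.stabilizer G Q).Normal] :
    MulAction.stabilizer (G ⧸ MulAction.stabilizer G Q)
      (Q.under (FixedPoints.subalgebra A B (MulAction.stabilizer G Q))) = ⊥ := by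
  refine (Subgroup.eq_bot_iff_forall _).2 <| QuotientGroup.mk_surjective.forall.2 fun g hg ↦ ?_
  obtain ⟨h, hh, hgh⟩ := exists_smul_eq_smul_of_mk_mem_stabilizer_under hg
  rw [QuotientGroup.eq_one_iff, MulAction.mem_stabilizer_iff, hgh,
    MulAction.mem_stabilizer_iff.1 hh]

/-- Such a `g` acts on `B ⧸ Q` as an automorphism over the ring of `H`-invariants, and all of these
automorphisms are induced by elements of `H`. -/
theorem exists_mem_smul_sub_smul_mem [Finite G] {H : Subgroup G}
    {Q : Ideal B} [Q.IsPrime] {g : G} (hg : g ∈ MulAction.stabilizer G Q)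
    (hgH : ∀ y ∈ FixedPoints.subalgebra A B H, g • y - y ∈ Q) :
    ∃ h ∈ H, ∀ x : B, g • x - h • x ∈ Q := by
  let P := Q.under (FixedPoints.subalgebra A B H)
  let f : (B ⧸ Q) ≃ₐ[FixedPoints.subalgebra A B H ⧸ P] (B ⧸ Q) :=
    AlgEquiv.ofRingEquiv
      (f := (Ideal.Quotient.stabilizerHom Q (Q.under A) G ⟨g, hg⟩).toRingEquiv) <|
      Ideal.Quotient.mk_surjective.forall.2 fun y ↦ Ideal.Quotient.eq.2 (hgH y y.2)
  obtain ⟨⟨⟨h, hh⟩, _⟩, h_eq⟩ := Ideal.Quotient.stabilizerHom_surjective H P Q f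
  exact ⟨h, hh, fun x ↦ Ideal.Quotient.eq.1 (DFunLike.congr_fun h_eq (Ideal.Quotient.mk Q x)).symm⟩

variable (A) in
theorem inertia_under_fixedPoints_eq_bot [Finite G] (Q : Ideal B) [Q.IsPrime]
    [(Q.inertia G).Normal] :
    (Q.under (FixedPoints.subalgebra A B (Q.inertia G))).inertia (G ⧸ Q.inertia G) = ⊥ := by
  refine (Subgroup.eq_bot_iff_forall _).2 <| QuotientGroup.mk_surjective.forall.2 fun g hg ↦ ?_
  obtain ⟨h, hh, hgh⟩ :=
    exists_smul_eq_smul_of_mk_mem_stabilizer_under (Ideal.inertia_le_stabilizer _ hg)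
  have g_mem : g ∈ MulAction.stabilizer G Q :=
    hgh.trans (MulAction.mem_stabilizer_iff.1 (Ideal.inertia_le_stabilizer _ hh))
  obtain ⟨k, hk, hgk⟩ := exists_mem_smul_sub_smul_mem (A := A) g_mem fun y hy ↦ hg ⟨y, hy⟩
  exact (QuotientGroup.eq_one_iff g).2 fun x ↦ by simpa using Q.add_mem (hgk x) (hk x)

theorem exists_eigenvector_sub_one_mem [Finite G] {Q : Ideal B} [Q.IsMaximal]
    [(MulAction.stabilizer G Q).Normal] {χ : G →* Aˣ} (hχ : MulAction.stabilizer G Q ≤ χ.ker) :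
    ∃ b : B, b - 1 ∈ Q ∧ ∀ g : G, g • b = χ g • b := by
  have := Algebra.IsInvariant.isIntegral (FixedPoints.subalgebra A B (MulAction.stabilizer G Q)) B
    (MulAction.stabilizer G Q)
  obtain ⟨b, hb, smul_b⟩ := exists_eigenvector_sub_one_mem_of_stabilizer_eq_bot
    (stabilizer_under_fixedPoints_eq_bot A Q) (QuotientGroup.lift _ χ hχ)
  exact ⟨b, hb, fun g ↦ congrArg Subtype.val (smul_b g)⟩

theorem exists_eigenvector_notMem [Finite G] {Q : Ideal B} [Q.IsPrime]
    [(Q.inertia G).Normal] {χ : G →* Aˣ} (hχ : Q.inertia G ≤ χ.ker) :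
    ∃ b : B, b ∉ Q ∧ ∀ g : G, g • b = χ g • b := by
  obtain ⟨b, hb, smul_b⟩ := exists_eigenvector_notMem_of_inertia_eq_bot
    (inertia_under_fixedPoints_eq_bot A Q) (QuotientGroup.lift _ χ hχ)
  exact ⟨b, hb, fun g ↦ congrArg Subtype.val (smul_b g)⟩

end Quotient

end FiniteGroupAction

section Valuation

open Polynomial

section IntegralClosure

variable {R L : Type*} [CommRing R] [Field L] [Algebra R L]

theorem isIntegral_of_forall_valuationSubring {x : L}
    (h : ∀ V : ValuationSubring L, (∀ r, algebraMap R L r ∈ V) → x ∈ V) : IsIntegral R x := by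
  by_contra hx
  have : IsIntegrallyClosedIn (integralClosure R L).toSubring L :=
    inferInstanceAs (IsIntegrallyClosedIn (integralClosure R L) L)
  obtain ⟨V, hV, hxV⟩ := Subring.exists_le_valuationSubring_of_isIntegrallyClosedIn
    (R := (integralClosure R L).toSubring) hx
  exact hxV (h V fun r ↦ hV ((integralClosure R L).algebraMap_mem r))

theorem aeval_divX_mul_add (p : R[X]) (x : L) :
    aeval x p.divX * x + algebraMap R L (p.coeff 0) = aeval x p := by
  conv_rhs => rw [← divX_mul_X_add p]
  simp

/-- Let `V` be a valuation ring containing `R`. If `x ∈ V` there is nothing to show; otherwise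
`x⁻¹ ∈ V`, and the tails `aeval x (divX^[k] p)` are computed recursively from `p(x) = 0` by means
of `x⁻¹` and the coefficients of `p`. -/
theorem isIntegral_aeval_iterate_divX {p : R[X]} {x : L} (hp : aeval x p = 0) (k : ℕ) :
    IsIntegral R (aeval x (divX^[k] p)) := by
  refine isIntegral_of_forall_valuationSubring fun V hV ↦ ?_
  by_cases hx : x ∈ V
  · rw [aeval_eq_sum_range]
    refine sum_mem fun i _ ↦ ?_
    rw [Algebra.smul_def]
    exact mul_mem (hV _) (pow_mem hx i)
  have hx0 : x ≠ 0 := fun h ↦ hx (h ▸ zero_mem V)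
  induction k with
  | zero => simp [hp]
  | succ k ih =>
    have tail_eq := eq_sub_of_add_eq (aeval_divX_mul_add (divX^[k] p) x)
    rw [Function.iterate_succ_apply', eq_div_of_mul_eq hx0 tail_eq, div_eq_mul_inv]
    exact mul_mem (sub_mem ih (hV _)) ((V.mem_or_inv_mem x).resolve_left hx)

theorem isIntegral_aeval_iterate_divX_mul {p : R[X]} {x : L} (hp : aeval x p = 0) (k : ℕ) :
    IsIntegral R (aeval x (divX^[k] p) * x) := by
  cases k with
  | zero => simp [hp, isIntegral_zero]
  | succ k =>
    rw [Function.iterate_succ_apply', eq_sub_of_add_eq (aeval_divX_mul_add (divX^[k] p) x)]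
    exact (isIntegral_aeval_iterate_divX hp k).sub isIntegral_algebraMap

end IntegralClosure

theorem valuation_map_lt_one_iff {F F' : Type*} [Field F] [Field F'] (A : ValuationSubring F')
    (φ : F →+* F') (x : F) : A.valuation (φ x) < 1 ↔ (A.comap φ).valuation x < 1 := by
  rw [← ValuationSubring.mem_nonunits_iff, ← ValuationSubring.mem_nonunits_iff, ← inv_inv x,
    map_inv₀, ValuationSubring.inv_mem_nonunits_iff, ValuationSubring.inv_mem_nonunits_iff,
    map_eq_zero_iff φ φ.injective, ValuationSubring.mem_comap]

theorem valuation_map_eq_one_iff {F F' : Type*} [Field F] [Field F'] (A : ValuationSubring F')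
    (φ : F →+* F') (x : F) : A.valuation (φ x) = 1 ↔ (A.comap φ).valuation x = 1 := by
  rw [eq_iff_le_not_lt, eq_iff_le_not_lt, valuation_map_lt_one_iff,
    ValuationSubring.valuation_le_one_iff, ValuationSubring.valuation_le_one_iff,
    ValuationSubring.mem_comap]

variable {K L : Type*} [Field K] [Field L] [Algebra K L] {O : ValuationSubring K}

theorem exists_aeval_eq_zero_map_residue_ne_zero [Algebra.IsAlgebraic K L] (O : ValuationSubring K)
    (x : L) : ∃ p : O[X], aeval x p = 0 ∧ p.map (IsLocalRing.residue O) ≠ 0 := by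
  obtain ⟨p, hp0, hp⟩ :=
    (IsFractionRing.isAlgebraic_iff O K L).2 (Algebra.IsAlgebraic.isAlgebraic (R := K) x)
  obtain ⟨k, hk, k_max⟩ := p.support.exists_max_image (fun i ↦ O.valuation (p.coeff i))
    (support_nonempty.2 hp0)
  have dvd_coeff (i) : p.coeff k ∣ p.coeff i := by
    by_cases hi : i ∈ p.support
    · obtain ⟨c, hc⟩ := (O.valuation_le_iff _ _).1 (k_max i hi)
      exact ⟨c, Subtype.ext (hc.symm.trans (mul_comm _ _))⟩
    · simp [notMem_support_iff.1 hi]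
  obtain ⟨q, hq⟩ := (C_dvd_iff_dvd_coeff _ p).2 dvd_coeff
  have coeff_ne_zero := mem_support_iff.1 hk
  refine ⟨q, ?_, fun h ↦ one_ne_zero (α := IsLocalRing.ResidueField O) ?_⟩
  · rw [hq, map_mul, aeval_C] at hp
    refine (mul_eq_zero.1 hp).resolve_left ?_
    exact (map_ne_zero_iff _ (FaithfulSMul.algebraMap_injective O L)).2 coeff_ne_zero
  · have coeff_eq_one : q.coeff k = 1 := by
      have := congr_arg (coeff · k) hq
      rw [coeff_C_mul] at this
      exact (mul_eq_left₀ coeff_ne_zero).1 this.symm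
    have := congr_arg (coeff · k) h
    rwa [coeff_map, coeff_eq_one, map_one, coeff_zero] at this

theorem algebraMap_mem_of_comap_eq {A : ValuationSubring L}
    (hA : A.comap (algebraMap K L) = O) (a : O) : algebraMap O L a ∈ A := by
  subst hA
  exact a.2

theorem mem_of_isIntegral {A : ValuationSubring L} (hA : A.comap (algebraMap K L) = O) {x : L}
    (hx : IsIntegral O x) : x ∈ A := by
  let := ((algebraMap O L).codRestrict A (algebraMap_mem_of_comap_eq hA)).toAlgebra
  have : IsScalarTower O A L := .of_algebraMap_eq' rfl
  obtain ⟨y, rfl⟩ := IsIntegrallyClosed.isIntegral_iff.1 (hx.tower_top (A := A))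
  exact y.2

theorem coeff_iterate_divX {R : Type*} [Semiring R] (p : R[X]) (k i : ℕ) :
    (divX^[k] p).coeff i = p.coeff (i + k) := by
  induction k generalizing i with
  | zero => rfl
  | succ k ih =>
    rw [Function.iterate_succ_apply', coeff_divX, ih, Nat.add_right_comm, Nat.add_assoc]

theorem valuation_aeval_lt_one {A : ValuationSubring L} (hA : A.comap (algebraMap K L) = O)
    {x : L} (hx : x ∈ A) {p : O[X]} (hp : ∀ i, O.valuation (p.coeff i) < 1) :
    A.valuation (aeval x p) < 1 := by
  rw [aeval_eq_sum_range]
  refine Valuation.map_sum_lt _ one_ne_zero fun i _ ↦ ?_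
  rw [Algebra.smul_def, map_mul, map_pow]
  have coeff_lt : A.valuation (algebraMap O L (p.coeff i)) < 1 := by
    subst hA
    exact (valuation_map_lt_one_iff A (algebraMap K L) _).2 (hp i)
  exact mul_lt_one_of_lt_of_le coeff_lt (pow_le_one₀ zero_le ((A.valuation_le_one_iff x).2 hx))

theorem valuation_algebraMap_eq_one {A : ValuationSubring L} (hA : A.comap (algebraMap K L) = O)
    {a : O} (ha : IsUnit a) : A.valuation (algebraMap O L a) = 1 := by
  subst hA
  exact (valuation_map_eq_one_iff A (algebraMap K L) a).2
    ((ValuationSubring.valuation_eq_one_iff _ a).1 ha)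

/-- For `x` in the valuation ring, `b` is congruent to a unit coefficient of an equation of `x`. -/
theorem exists_isIntegral_mul [Algebra.IsAlgebraic K L] (O : ValuationSubring K) (x : L) :
    ∃ b : L, IsIntegral O b ∧ IsIntegral O (b * x) ∧
      ∀ A : ValuationSubring L, A.comap (algebraMap K L) = O → x ∈ A → A.valuation b = 1 := by
  obtain ⟨p, hp, map_ne_zero⟩ := exists_aeval_eq_zero_map_residue_ne_zero O x
  let k := (p.map (IsLocalRing.residue O)).natDegree
  have isUnit_coeff : IsUnit (p.coeff k) := by
    rw [← IsLocalRing.residue_ne_zero_iff_isUnit, ← coeff_map]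
    exact leadingCoeff_ne_zero.2 map_ne_zero
  have valuation_coeff (i : ℕ) (hi : k < i) : O.valuation (p.coeff i) < 1 := by
    rw [← O.valuation_lt_one_iff, ← IsLocalRing.residue_eq_zero_iff, ← coeff_map]
    exact coeff_eq_zero_of_natDegree_lt hi
  refine ⟨aeval x (divX^[k] p), isIntegral_aeval_iterate_divX hp k,
    isIntegral_aeval_iterate_divX_mul hp k, fun A hA hx ↦ ?_⟩
  have tail_lt : A.valuation (aeval x (divX^[k] p).divX * x) < 1 := by
    rw [← Function.iterate_succ_apply' divX, map_mul]
    refine mul_lt_one_of_lt_of_le (valuation_aeval_lt_one hA hx fun i ↦ ?_)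
      ((A.valuation_le_one_iff x).2 hx)
    rw [coeff_iterate_divX]
    exact valuation_coeff _ (by omega)
  have coeff_eq := valuation_algebraMap_eq_one hA isUnit_coeff
  rw [← aeval_divX_mul_add, coeff_iterate_divX, Nat.zero_add,
    Valuation.map_add_eq_of_lt_right _ (tail_lt.trans_eq coeff_eq.symm), coeff_eq]

/-- The center of a valuation ring `A` of `L` lying over `O` on the integral closure of `O` in `L`,
that is, the contraction of the maximal ideal of `A`. -/
noncomputable def center {A : ValuationSubring L} (hA : A.comap (algebraMap K L) = O) :
    Ideal (integralClosure O L) :=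
  (IsLocalRing.maximalIdeal A).comap <|
    (integralClosure O L).val.toRingHom.codRestrict A fun b ↦ mem_of_isIntegral hA b.2

section Center

open scoped Pointwise

variable {A : ValuationSubring L} (hA : A.comap (algebraMap K L) = O)

theorem mem_center {b : integralClosure O L} : b ∈ center hA ↔ A.valuation (b : L) < 1 :=
  A.valuation_lt_one_iff _

theorem valuation_eq_one_iff_notMem_center {b : integralClosure O L} :
    A.valuation (b : L) = 1 ↔ b ∉ center hA := by
  have := (A.valuation_le_one_iff _).2 (mem_of_isIntegral hA b.2)
  rw [mem_center, not_lt, this.ge_iff_eq, eq_comm]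

instance center_isMaximal : (center hA).IsMaximal := by
  have : (center hA).IsPrime := Ideal.comap_isPrime _ _
  have under_eq : (center hA).under O = IsLocalRing.maximalIdeal O := by
    ext a
    subst hA
    rw [ValuationSubring.valuation_lt_one_iff, ← valuation_map_lt_one_iff]
    exact mem_center rfl
  refine Ideal.isMaximal_of_isIntegral_of_isMaximal_comap (R := O) _ ?_
  rw [← Ideal.under_def, under_eq]
  infer_instance

variable [Algebra.IsAlgebraic K L] {hA} {σ : L ≃ₐ[K] L}

theorem apply_mem_of_mem_stabilizer_center (hσ : σ ∈ MulAction.stabilizer (L ≃ₐ[K] L) (center hA))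
    {x : L} (hx : x ∈ A) : σ x ∈ A := by
  obtain ⟨b, hb, hbx, valuation_b⟩ := exists_isIntegral_mul O x
  have valuation_σb : A.valuation (σ b) = 1 := by
    rw [MulAction.mem_stabilizer_iff] at hσ
    refine (valuation_eq_one_iff_notMem_center hA (b := σ • ⟨b, hb⟩)).2 ?_
    rw [← hσ, Ideal.smul_mem_pointwise_smul_iff, ← valuation_eq_one_iff_notMem_center hA]
    exact valuation_b A hA hx
  rw [← A.valuation_le_one_iff]
  calc
    A.valuation (σ x) = A.valuation (σ (b * x)) := by
      rw [map_mul, map_mul, valuation_σb, one_mul]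
    _ ≤ 1 := (A.valuation_le_one_iff _).2
      (mem_of_isIntegral hA (hbx.map (σ.restrictScalars O)))

theorem mem_iff_apply_mem_of_mem_stabilizer_center
    (hσ : σ ∈ MulAction.stabilizer (L ≃ₐ[K] L) (center hA)) (x : L) : x ∈ A ↔ σ x ∈ A :=
  ⟨apply_mem_of_mem_stabilizer_center hσ, fun h ↦ by
    simpa using apply_mem_of_mem_stabilizer_center (inv_mem hσ) h⟩

theorem valuation_apply_sub_lt_one_of_mem_inertia_center (hσ : σ ∈ (center hA).inertia (L ≃ₐ[K] L))
    {x : L} (hx : x ∈ A) : A.valuation (σ x - x) < 1 := by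
  obtain ⟨b, hb, hbx, valuation_b⟩ := exists_isIntegral_mul O x
  have valuation_b_sub : A.valuation (σ b - b) < 1 := (mem_center hA).1 (hσ ⟨b, hb⟩)
  have valuation_bx_sub : A.valuation (σ (b * x) - b * x) < 1 := (mem_center hA).1 (hσ ⟨_, hbx⟩)
  have valuation_σx : A.valuation (σ x) ≤ 1 := (A.valuation_le_one_iff _).2 <|
    apply_mem_of_mem_stabilizer_center (Ideal.inertia_le_stabilizer _ hσ) hx
  have b_mul_sub : b * (σ x - x) = (σ (b * x) - b * x) - (σ b - b) * σ x := by
    rw [map_mul]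
    ring
  calc
    A.valuation (σ x - x) = A.valuation (b * (σ x - x)) := by
      rw [map_mul, valuation_b A hA hx, one_mul]
    _ < 1 := b_mul_sub ▸ Valuation.map_sub_lt _ valuation_bx_sub
      (map_mul A.valuation _ _ ▸ mul_lt_one_of_lt_of_le valuation_b_sub valuation_σx)

end Center

end Valuation

section Character

open scoped IsMulCommutative in
theorem exists_character_apply_ne_one {G R : Type*} [Group G] [IsMulCommutative G] [Finite G]
    [CommRing R] [IsDomain R] {n : ℕ} [NeZero n] {ζ : R} (hζ : IsPrimitiveRoot ζ n)
    (hG : ∀ g : G, g ^ n = 1) {H : Subgroup G} {s : G} (hs : s ∉ H) :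
    ∃ χ : G →* Rˣ, H ≤ χ.ker ∧ χ s ≠ 1 := by
  have exponent_dvd : Monoid.exponent (G ⧸ H) ∣ n :=
    Monoid.exponent_dvd_of_forall_pow_eq_one <| QuotientGroup.mk_surjective.forall.2 fun g ↦ by
      rw [← QuotientGroup.mk_pow, hG, QuotientGroup.mk_one]
  have : HasEnoughRootsOfUnity R n := ⟨⟨ζ, hζ⟩, inferInstance⟩
  have := HasEnoughRootsOfUnity.of_dvd R exponent_dvd
  obtain ⟨χ, hχ⟩ := CommGroup.exists_apply_ne_one_of_hasEnoughRootsOfUnity (G ⧸ H) R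
    (mt (QuotientGroup.eq_one_iff s).1 hs)
  refine ⟨χ.comp (QuotientGroup.mk' H), fun h hh ↦ ?_, hχ⟩
  rw [MonoidHom.mem_ker, MonoidHom.comp_apply, QuotientGroup.mk'_apply,
    (QuotientGroup.eq_one_iff h).2 hh, map_one]

end Character

section FiniteLevel

open scoped Pointwise

variable {K F : Type*} [Field K] [Field F] [Algebra K F] {O : ValuationSubring K} {n : ℕ}

theorem exists_isPrimitiveRoot_of_valuationSubring [NeZero n] {ζ : K} (hζ : IsPrimitiveRoot ζ n) :
    ∃ ζ' : O, IsPrimitiveRoot ζ' n := by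
  have hζO : ζ ∈ O := by
    rw [← O.valuation_le_one_iff]
    refine (pow_le_one_iff (NeZero.ne n)).1 ?_
    rw [← map_pow, hζ.pow_eq_one, map_one]
  exact ⟨⟨ζ, hζO⟩, IsPrimitiveRoot.coe_submonoidClass_iff.1 hζ⟩

theorem exists_pow_eq_algebraMap_of_eigenvector [FiniteDimensional K F] [IsGalois K F]
    (pow_eq_one : ∀ σ : F ≃ₐ[K] F, σ ^ n = 1) {χ : (F ≃ₐ[K] F) →* Oˣ} {b : integralClosure O F}
    (hb : ∀ σ : F ≃ₐ[K] F, σ • b = χ σ • b) : ∃ c : K, (b : F) ^ n = algebraMap K F c := by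
  obtain ⟨c, hc⟩ := (IsGalois.mem_range_algebraMap_iff_fixed (b ^ n : F)).2
    fun (σ : F ≃ₐ[K] F) ↦ by
    have : σ • b ^ n = b ^ n := by
      rw [smul_pow', hb, smul_pow, ← map_pow, pow_eq_one, map_one, one_smul]
    exact congrArg Subtype.val this
  exact ⟨c, hc.symm⟩

theorem character_apply_eq_one_of_apply_eq {χ : (F ≃ₐ[K] F) →* Oˣ} {b : integralClosure O F}
    {σ : F ≃ₐ[K] F} (hb : σ • b = χ σ • b) (hb0 : b ≠ 0) (hσ : σ b = b) : χ σ = 1 := by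
  have : (χ σ : O) • b = (1 : O) • b := by
    rw [one_smul]
    exact hb.symm.trans (Subtype.ext hσ)
  exact Units.ext (smul_left_injective O hb0 this)

variable {A : ValuationSubring F} (hA : A.comap (algebraMap K F) = O) [NeZero n] {ζ : K}
  (hζ : IsPrimitiveRoot ζ n) [FiniteDimensional K F] [IsAbelianGalois K F]
  (pow_eq_one : ∀ σ : F ≃ₐ[K] F, σ ^ n = 1) {σ : F ≃ₐ[K] F}

include hζ pow_eq_one

theorem mem_stabilizer_center (hσ : ∀ α : F,
    (∃ a : K, O.valuation a < 1 ∧ α ^ n = algebraMap K F (1 + a)) → σ α = α) :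
    σ ∈ MulAction.stabilizer (F ≃ₐ[K] F) (center hA) := by
  by_contra h
  obtain ⟨ζ', hζ'⟩ := exists_isPrimitiveRoot_of_valuationSubring (O := O) hζ
  obtain ⟨χ, hχ, χ_ne_one⟩ := exists_character_apply_ne_one hζ' pow_eq_one h
  obtain ⟨b, hb, smul_b⟩ := exists_eigenvector_sub_one_mem hχ
  have hb0 : b ≠ 0 := by
    rintro rfl
    exact Ideal.one_notMem (center hA) (by simpa using neg_mem hb)
  refine χ_ne_one (character_apply_eq_one_of_apply_eq (smul_b σ) hb0 (hσ b ?_))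
  obtain ⟨c, hc⟩ := exists_pow_eq_algebraMap_of_eigenvector pow_eq_one smul_b
  refine ⟨c - 1, ?_, by rw [hc, add_sub_cancel]⟩
  have pow_sub_one_mem : b ^ n - 1 ∈ center hA :=
    Ideal.mem_of_dvd _ (sub_one_dvd_pow_sub_one b n) hb
  have valuation_lt : A.valuation (algebraMap K F (c - 1)) < 1 := by
    rw [map_sub, ← hc, map_one]
    exact (mem_center hA).1 pow_sub_one_mem
  subst hA
  exact (valuation_map_lt_one_iff A _ _).1 valuation_lt

theorem mem_inertia_center (hσ : ∀ α : F,
    (∃ u : Kˣ, u ∈ O.unitGroup ∧ α ^ n = algebraMap K F u) → σ α = α) :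
    σ ∈ (center hA).inertia (F ≃ₐ[K] F) := by
  by_contra h
  obtain ⟨ζ', hζ'⟩ := exists_isPrimitiveRoot_of_valuationSubring (O := O) hζ
  obtain ⟨χ, hχ, χ_ne_one⟩ := exists_character_apply_ne_one hζ' pow_eq_one h
  obtain ⟨b, hb, smul_b⟩ := exists_eigenvector_notMem hχ
  have hb0 : b ≠ 0 := by
    rintro rfl
    exact hb (zero_mem _)
  refine χ_ne_one (character_apply_eq_one_of_apply_eq (smul_b σ) hb0 (hσ b ?_))
  obtain ⟨c, hc⟩ := exists_pow_eq_algebraMap_of_eigenvector pow_eq_one smul_b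
  have valuation_c : O.valuation c = 1 := by
    have valuation_map_c : A.valuation (algebraMap K F c) = 1 := by
      rw [← hc, map_pow, (valuation_eq_one_iff_notMem_center hA).2 hb, one_pow]
    subst hA
    exact (valuation_map_eq_one_iff A _ c).1 valuation_map_c
  have hc0 : c ≠ 0 := by
    rintro rfl
    simp at valuation_c
  exact ⟨Units.mk0 c hc0, (O.mem_unitGroup_iff _).2 valuation_c, hc⟩

end FiniteLevel

section KummerExtension

open Polynomial IntermediateField

variable {K L : Type*} [Field K] [Field L] [Algebra K L] {n : ℕ} {ζ : K}

theorem minpoly_dvd_X_pow_sub_C {α : L} {x : K} (hα : α ^ n = algebraMap K L x) :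
    minpoly K α ∣ X ^ n - C x :=
  minpoly.dvd _ _ (by simp [hα])

variable [NeZero n]

theorem exists_apply_eq_algebraMap_pow_mul (hζ : IsPrimitiveRoot ζ n) {α : L} {x : K} (hx : x ≠ 0)
    (hα : α ^ n = algebraMap K L x) (σ : L →ₐ[K] L) :
    ∃ i : ℕ, σ α = algebraMap K L (ζ ^ i) * α := by
  have hx' : algebraMap K L x ≠ 0 := (_root_.map_ne_zero _).2 hx
  have hα0 : α ≠ 0 := by
    rintro rfl
    exact hx' (hα ▸ zero_pow (NeZero.ne n))
  have div_pow_eq_one : (σ α / α) ^ n = 1 := by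
    rw [div_pow, ← map_pow, hα, AlgHom.commutes, div_self hx']
  obtain ⟨i, -, hi⟩ :=
    (hζ.map_of_injective (algebraMap K L).injective).eq_pow_of_pow_eq_one div_pow_eq_one
  exact ⟨i, by rw [map_pow, hi, div_mul_cancel₀ _ hα0]⟩

variable {S : Set L} (hS : ∀ α ∈ S, ∃ x : K, x ≠ 0 ∧ α ^ n = algebraMap K L x)
  (hζ : IsPrimitiveRoot ζ n)

include hS hζ

theorem isSeparable_adjoin_of_pow_eq_algebraMap : Algebra.IsSeparable K (adjoin K S) := by
  refine (isSeparable_adjoin_iff_isSeparable K L).2 fun α hα ↦ ?_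
  obtain ⟨x, hx0, hx⟩ := hS α hα
  exact (separable_X_pow_sub_C x hζ.neZero'.ne hx0).of_dvd (minpoly_dvd_X_pow_sub_C hx)

theorem splits_minpoly_adjoin_of_pow_eq_algebraMap {α : L} (hα : α ∈ S) :
    ((minpoly K α).map (algebraMap K (adjoin K S))).Splits := by
  obtain ⟨x, -, hx⟩ := hS α hα
  have pow_eq : (⟨α, subset_adjoin K S hα⟩ : adjoin K S) ^ n = algebraMap K _ x := Subtype.ext hx
  have splits := X_pow_sub_C_splits_of_isPrimitiveRoot
    (hζ.map_of_injective (algebraMap K (adjoin K S)).injective) pow_eq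
  refine splits.of_dvd (X_pow_sub_C_ne_zero (NeZero.pos n) _) ?_
  simpa using Polynomial.map_dvd (algebraMap K (adjoin K S)) (minpoly_dvd_X_pow_sub_C hx)

theorem normal_adjoin_of_pow_eq_algebraMap : Normal K (adjoin K S) := by
  have := isSeparable_adjoin_of_pow_eq_algebraMap hS hζ
  refine normal_iff.2 fun y ↦ ⟨Algebra.IsIntegral.isIntegral y, ?_⟩
  rw [← minpoly.algHom_eq (adjoin K S).val Subtype.val_injective]
  refine splits_of_mem_adjoin K L (S := S) (fun α hα ↦ ⟨?_, ?_⟩) y.2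
  · obtain ⟨x, -, hx⟩ := hS α hα
    exact .of_pow (NeZero.pos n) (hx ▸ isIntegral_algebraMap)
  · exact splits_minpoly_adjoin_of_pow_eq_algebraMap hS hζ hα

theorem isAbelianGalois_adjoin_of_pow_eq_algebraMap : IsAbelianGalois K (adjoin K S) := by
  have := normal_adjoin_of_pow_eq_algebraMap hS hζ
  have := isSeparable_adjoin_of_pow_eq_algebraMap hS hζ
  have : IsGalois K (adjoin K S) := {}
  refine { is_comm.comm := fun σ τ ↦ AlgEquiv.coe_toAlgHom_injective <|
    adjoin_algHom_ext K fun α hα ↦ ?_ }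
  obtain ⟨x, hx0, hx⟩ := hS α hα
  obtain ⟨i, hi⟩ := exists_apply_eq_algebraMap_pow_mul hζ hx0
    (α := (⟨α, subset_adjoin K S hα⟩ : adjoin K S)) (Subtype.ext hx) σ
  obtain ⟨j, hj⟩ := exists_apply_eq_algebraMap_pow_mul hζ hx0
    (α := (⟨α, subset_adjoin K S hα⟩ : adjoin K S)) (Subtype.ext hx) τ
  simp only [AlgEquiv.coe_toAlgHom, AlgEquiv.mul_apply] at hi hj ⊢
  rw [hi, hj, map_mul, map_mul, AlgEquiv.commutes, AlgEquiv.commutes, hi, hj, mul_left_comm]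

theorem algEquiv_adjoin_pow_eq_one_of_pow_eq_algebraMap (σ : adjoin K S ≃ₐ[K] adjoin K S) :
    σ ^ n = 1 := by
  refine AlgEquiv.coe_toAlgHom_injective <| adjoin_algHom_ext K fun α hα ↦ ?_
  obtain ⟨x, hx0, hx⟩ := hS α hα
  set β : adjoin K S := ⟨α, subset_adjoin K S hα⟩
  obtain ⟨i, hi⟩ := exists_apply_eq_algebraMap_pow_mul hζ hx0 (α := β) (Subtype.ext hx) σ
  have pow_apply (k : ℕ) : (σ ^ k) β = algebraMap K _ ((ζ ^ i) ^ k) * β := by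
    induction k with
    | zero => simp
    | succ k ih =>
      rw [pow_succ, AlgEquiv.mul_apply, show σ β = _ from hi, map_mul, AlgEquiv.commutes, ih,
        ← mul_assoc, ← map_mul, ← pow_succ']
  change (σ ^ n) β = β
  rw [pow_apply, pow_right_comm, hζ.pow_eq_one, one_pow, map_one, one_mul]

end KummerExtension

section AbelianExtension

variable {K L : Type*} [Field K] [Field L] [Algebra K L] [IsAbelianGalois K L]
  {O : ValuationSubring K} {A : ValuationSubring L} (hA : A.comap (algebraMap K L) = O) {n : ℕ}

theorem algEquiv_intermediateField_pow_eq_one (pow_eq_one : ∀ σ : L ≃ₐ[K] L, σ ^ n = 1)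
    (F : IntermediateField K L) (τ : F ≃ₐ[K] F) : τ ^ n = 1 := by
  obtain ⟨σ, rfl⟩ := AlgEquiv.restrictNormalHom_surjective (F := K) (K₁ := F) L τ
  rw [← map_pow, pow_eq_one, map_one]

variable [NeZero n] {ζ : K} (hζ : IsPrimitiveRoot ζ n) {σ : L ≃ₐ[K] L}
  (pow_eq_one : ∀ σ : L ≃ₐ[K] L, σ ^ n = 1)

include hA hζ pow_eq_one

theorem mem_iff_apply_mem_of_forall_apply_eq (hσ : ∀ α : L,
    (∃ a : K, O.valuation a < 1 ∧ α ^ n = algebraMap K L (1 + a)) → σ α = α) (x : L) :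
    x ∈ A ↔ σ x ∈ A := by
  let F := (FiniteGaloisIntermediateField.adjoin K {x}).toIntermediateField
  have hx : x ∈ F := FiniteGaloisIntermediateField.subset_adjoin K {x} rfl
  have hB : (A.comap (algebraMap F L)).comap (algebraMap K F) = O := hA
  have restrict_mem_stabilizer :=
    mem_stabilizer_center hB hζ (algEquiv_intermediateField_pow_eq_one pow_eq_one F)
      (σ := σ.restrictNormal F) fun α ⟨a, ha, hα⟩ ↦ (algebraMap F L).injective <| by
        rw [AlgEquiv.restrictNormal_commutes]
        exact hσ _ ⟨a, ha, congrArg (algebraMap F L) hα⟩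
  have := mem_iff_apply_mem_of_mem_stabilizer_center restrict_mem_stabilizer ⟨x, hx⟩
  rwa [ValuationSubring.mem_comap, ValuationSubring.mem_comap,
    AlgEquiv.restrictNormal_commutes] at this

theorem valuation_apply_sub_lt_one_of_forall_apply_eq (hσ : ∀ α : L,
    (∃ u : Kˣ, u ∈ O.unitGroup ∧ α ^ n = algebraMap K L u) → σ α = α) {x : L} (hxA : x ∈ A) :
    A.valuation (σ x - x) < 1 := by
  let F := (FiniteGaloisIntermediateField.adjoin K {x}).toIntermediateField
  have hx : x ∈ F := FiniteGaloisIntermediateField.subset_adjoin K {x} rfl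
  have hB : (A.comap (algebraMap F L)).comap (algebraMap K F) = O := hA
  have restrict_mem_inertia :=
    mem_inertia_center hB hζ (algEquiv_intermediateField_pow_eq_one pow_eq_one F)
      (σ := σ.restrictNormal F) fun α ⟨u, hu, hα⟩ ↦ (algebraMap F L).injective <| by
        rw [AlgEquiv.restrictNormal_commutes]
        exact hσ _ ⟨u, hu, congrArg (algebraMap F L) hα⟩
  have := valuation_apply_sub_lt_one_of_mem_inertia_center restrict_mem_inertia (x := ⟨x, hx⟩) hxA
  rwa [← valuation_map_lt_one_iff, map_sub, AlgEquiv.restrictNormal_commutes] at this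

end AbelianExtension

section TameResidueCharacteristic

theorem eq_of_pow_eq_pow_of_residue_eq {R : Type*} [CommRing R] [IsLocalRing R] {n : ℕ}
    (hn : (n : IsLocalRing.ResidueField R) ≠ 0) {x y : R} (hx : IsUnit x) (hxy : x ^ n = y ^ n)
    (residue_eq : IsLocalRing.residue R x = IsLocalRing.residue R y) : x = y := by
  have isUnit_geom_sum : IsUnit (∑ i ∈ Finset.range n, x ^ i * y ^ (n - 1 - i)) := by
    rw [← IsLocalRing.residue_ne_zero_iff_isUnit, RingHom.map_geom_sum₂, ← residue_eq,
      geom_sum₂_self]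
    exact mul_ne_zero hn (pow_ne_zero _ ((IsLocalRing.residue_ne_zero_iff_isUnit x).2 hx))
  refine sub_eq_zero.1 (isUnit_geom_sum.mul_right_eq_zero.1 ?_)
  rw [geom_sum₂_mul, hxy, sub_self]

variable {L : Type*} [Field L] {A : ValuationSubring L} {n : ℕ}

theorem eq_of_pow_eq_pow_of_valuation_sub_lt_one (hn : (n : IsLocalRing.ResidueField A) ≠ 0)
    {x y : L} (hx : A.valuation x = 1) (hxy : x ^ n = y ^ n) (hsub : A.valuation (x - y) < 1) :
    x = y := by
  have hxA : x ∈ A := (A.valuation_le_one_iff x).1 hx.le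
  have hyA : y ∈ A := by
    rw [← sub_sub_cancel x y]
    exact sub_mem hxA ((A.valuation_le_one_iff _).1 hsub.le)
  refine congrArg Subtype.val (eq_of_pow_eq_pow_of_residue_eq (x := (⟨x, hxA⟩ : A))
    (y := ⟨y, hyA⟩) hn ((A.valuation_eq_one_iff _).2 hx) (Subtype.ext hxy) ?_)
  rw [← sub_eq_zero, ← map_sub, IsLocalRing.residue_eq_zero_iff, A.valuation_lt_one_iff]
  exact hsub

theorem exists_pow_eq_one_valuation_sub_lt_one [NeZero n] {ζ : L} (hζ : IsPrimitiveRoot ζ n) {x : L}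
    (hx : A.valuation (x ^ n - 1) < 1) : ∃ ξ : L, ξ ^ n = 1 ∧ A.valuation (x - ξ) < 1 := by
  have factorization := hζ.pow_sub_pow_eq_prod_sub_mul x 1 (NeZero.pos n)
  simp only [one_pow, mul_one] at factorization
  by_contra! one_le
  refine hx.not_ge ?_
  rw [factorization, map_prod]
  exact Finset.one_le_prod' fun ξ hξ ↦
    one_le ξ ((Polynomial.mem_nthRootsFinset (NeZero.pos n) _).1 hξ)

variable {K : Type*} [Field K] [Algebra K L] {σ : L ≃ₐ[K] L}

theorem apply_eq_of_valuation_apply_sub_lt_one (hn : (n : IsLocalRing.ResidueField A) ≠ 0)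
    {α : L} {c : K} (hα : α ^ n = algebraMap K L c) (valuation_α : A.valuation α = 1)
    (hσ : A.valuation (σ α - α) < 1) : σ α = α := by
  refine (eq_of_pow_eq_pow_of_valuation_sub_lt_one hn valuation_α ?_ ?_).symm
  · rw [← map_pow, hα, AlgEquiv.commutes]
  · rwa [Valuation.map_sub_swap]

theorem apply_eq_of_pow_eq_one_add [NeZero n] {ζ : K} (hζ : IsPrimitiveRoot ζ n)
    (hn : (n : IsLocalRing.ResidueField A) ≠ 0) (hσ : ∀ x : L, x ∈ A ↔ σ x ∈ A) {α : L} {a : K}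
    (ha : A.valuation (algebraMap K L a) < 1) (hα : α ^ n = algebraMap K L (1 + a)) :
    σ α = α := by
  have pow_sub_lt : A.valuation (α ^ n - 1) < 1 := by
    rwa [hα, map_add, map_one, add_sub_cancel_left]
  have hζ' := hζ.map_of_injective (algebraMap K L).injective
  obtain ⟨ξ, hξ, sub_lt⟩ := exists_pow_eq_one_valuation_sub_lt_one hζ' pow_sub_lt
  have valuation_ξ : A.valuation ξ = 1 := by
    rw [← pow_eq_one_iff_of_nonneg zero_le (NeZero.ne n), ← map_pow, hξ, map_one]
  have apply_ξ : σ ξ = ξ := by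
    obtain ⟨i, -, rfl⟩ := hζ'.eq_pow_of_pow_eq_one hξ
    rw [← map_pow, AlgEquiv.commutes]
  have apply_sub_lt : A.valuation (σ α - ξ) < 1 := by
    have comap_eq : A.comap (σ : L →+* L) = A := SetLike.ext fun x ↦ (hσ x).symm
    have := (valuation_map_lt_one_iff A (σ : L →+* L) (α - ξ)).2 (by rwa [comap_eq])
    rwa [RingHom.coe_coe, map_sub, apply_ξ] at this
  refine apply_eq_of_valuation_apply_sub_lt_one hn hα ?_ ?_
  · rw [← sub_add_cancel α ξ, Valuation.map_add_eq_of_lt_right _ (sub_lt.trans_eq valuation_ξ.symm),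
      valuation_ξ]
  · rw [← sub_sub_sub_cancel_right _ _ ξ]
    exact Valuation.map_sub_lt _ apply_sub_lt sub_lt

theorem natCast_residueField_ne_zero_of_comap_eq {O : ValuationSubring K}
    (hA : A.comap (algebraMap K L) = O) (hn : (n : IsLocalRing.ResidueField O) ≠ 0) :
    (n : IsLocalRing.ResidueField A) ≠ 0 := by
  rw [← map_natCast (IsLocalRing.residue _), IsLocalRing.residue_ne_zero_iff_isUnit,
    ValuationSubring.valuation_eq_one_iff] at hn ⊢
  subst hA
  simpa using (valuation_map_eq_one_iff A (algebraMap K L) n).2 (by simpa using hn)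

end TameResidueCharacteristic

section Kprime

variable {K Ω : Type*} [Field K] [Field Ω] [Algebra K Ω] {n : ℕ}
  {O : ValuationSubring K}

theorem I1gp_subset_D1gp : I1gp K Ω n O ⊆ D1gp K Ω n O := by
  rintro σ hσ α ⟨a, ha, hα⟩
  have valuation_one_add : O.valuation (1 + a) = 1 := by
    rw [Valuation.map_add_eq_of_lt_left _ (by rwa [map_one]), map_one]
  have one_add_ne_zero : 1 + a ≠ 0 := by
    rw [← O.valuation.ne_zero_iff, valuation_one_add]
    exact one_ne_zero
  exact hσ α ⟨Units.mk0 _ one_add_ne_zero, (O.mem_unitGroup_iff _).2 valuation_one_add, hα⟩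

variable [NeZero n] {ζ : K} {O' : ValuationSubring (Kprime K Ω n)}

theorem D1gp_subset_Dgp (hζ : IsPrimitiveRoot ζ n)
    (hO' : O'.comap (algebraMap K (Kprime K Ω n)) = O) : D1gp K Ω n O ⊆ Dgp K Ω n O' := by
  have : IsAbelianGalois K (Kprime K Ω n) :=
    isAbelianGalois_adjoin_of_pow_eq_algebraMap (fun _ ↦ id) hζ
  exact fun σ hσ ↦ mem_iff_apply_mem_of_forall_apply_eq hO' hζ
    (algEquiv_adjoin_pow_eq_one_of_pow_eq_algebraMap (fun _ ↦ id) hζ) hσ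

theorem I1gp_subset_Igp (hζ : IsPrimitiveRoot ζ n)
    (hO' : O'.comap (algebraMap K (Kprime K Ω n)) = O) : I1gp K Ω n O ⊆ Igp K Ω n O' := by
  have : IsAbelianGalois K (Kprime K Ω n) :=
    isAbelianGalois_adjoin_of_pow_eq_algebraMap (fun _ ↦ id) hζ
  refine fun σ hσ ↦ ⟨D1gp_subset_Dgp hζ hO' (I1gp_subset_D1gp hσ), fun x hx ↦ ?_⟩
  exact valuation_apply_sub_lt_one_of_forall_apply_eq hO' hζ
    (algEquiv_adjoin_pow_eq_one_of_pow_eq_algebraMap (fun _ ↦ id) hζ) hσ hx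

theorem Dgp_subset_D1gp (hζ : IsPrimitiveRoot ζ n)
    (hO' : O'.comap (algebraMap K (Kprime K Ω n)) = O)
    (hn : (n : IsLocalRing.ResidueField O) ≠ 0) : Dgp K Ω n O' ⊆ D1gp K Ω n O := by
  rintro σ hσ α ⟨a, ha, hα⟩
  have hn' := natCast_residueField_ne_zero_of_comap_eq hO' hn
  subst hO'
  exact apply_eq_of_pow_eq_one_add hζ hn' hσ ((valuation_map_lt_one_iff O' _ a).2 ha) hα

theorem Igp_subset_I1gp (hO' : O'.comap (algebraMap K (Kprime K Ω n)) = O)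
    (hn : (n : IsLocalRing.ResidueField O) ≠ 0) : Igp K Ω n O' ⊆ I1gp K Ω n O := by
  rintro σ ⟨-, hσ⟩ α ⟨u, hu, hα⟩
  have hn' := natCast_residueField_ne_zero_of_comap_eq hO' hn
  have valuation_α : O'.valuation α = 1 := by
    subst hO'
    rw [← pow_eq_one_iff_of_nonneg zero_le (NeZero.ne n), ← map_pow, hα,
      valuation_map_eq_one_iff]
    exact (ValuationSubring.mem_unitGroup_iff _ u).1 hu
  exact apply_eq_of_valuation_apply_sub_lt_one hn' hα valuation_α
    (hσ α ((O'.valuation_le_one_iff α).1 valuation_α.le))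

theorem stmt_12_general (hζ : IsPrimitiveRoot ζ n)
    (hO' : O'.comap (algebraMap K (Kprime K Ω n)) = O) :
    D1gp K Ω n O ⊆ Dgp K Ω n O' ∧ I1gp K Ω n O ⊆ Igp K Ω n O' ∧
      ((n : IsLocalRing.ResidueField O) ≠ 0 →
        D1gp K Ω n O = Dgp K Ω n O' ∧ I1gp K Ω n O = Igp K Ω n O') :=
  ⟨D1gp_subset_Dgp hζ hO', I1gp_subset_Igp hζ hO', fun hn ↦
    ⟨(D1gp_subset_Dgp hζ hO').antisymm (Dgp_subset_D1gp hζ hO' hn),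
      (I1gp_subset_Igp hζ hO').antisymm (Igp_subset_I1gp hO' hn)⟩⟩

end Kprime

/-- for a valued field `(K, v)` with `char K ≠ ℓ` and `μ_ℓ ⊆ K`, and a
prolongation `O'` of `O_v` to `K' = K(√[ℓ]{K^×})`, one has `D_v^1 ⊆ D` and `I_v^1 ⊆ I`;
if moreover `char k(v) ≠ ℓ`, then `D_v^1 = D` and `I_v^1 = I`. -/
theorem stmt_12 (K : Type*) [Field K] (Ω : Type*) [Field Ω] [Algebra K Ω]
    [IsSepClosure K Ω] (ℓ : ℕ) (hℓ : ℓ.Prime) (hchar : ringChar K ≠ ℓ)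
    (hζ : ∃ ζ : K, IsPrimitiveRoot ζ ℓ)
    (O : ValuationSubring K) (O' : ValuationSubring ↥(Kprime K Ω ℓ))
    (hO' : O'.comap (algebraMap K ↥(Kprime K Ω ℓ)) = O) :
    D1gp K Ω ℓ O ⊆ Dgp K Ω ℓ O' ∧ I1gp K Ω ℓ O ⊆ Igp K Ω ℓ O' ∧
      (ringChar (IsLocalRing.ResidueField O) ≠ ℓ →
        D1gp K Ω ℓ O = Dgp K Ω ℓ O' ∧ I1gp K Ω ℓ O = Igp K Ω ℓ O') := by
  obtain ⟨ζ, hζ⟩ := hζ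
  have : NeZero ℓ := ⟨hℓ.ne_zero⟩
  have ⟨hD, hI, hDI⟩ := stmt_12_general hζ hO'
  exact ⟨hD, hI, fun hr ↦ hDI (mt (CharP.ringChar_of_prime_eq_zero hℓ) hr)⟩
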